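/- For every ε* > 0 there exists c > 0 such that for all sufficiently large k: for every k-DFA D with at most k² states, the number of permutations τ ∈ S_k (read as the word τ(1),…,τ(k)) with c(root(D), τ) ≤ (1/2 − ε*)k² is at most exp(−ck)·k!. Equivalently, G(k, (1/2 − ε*)k², k²) ≤ exp(−ck)·k!. -/

import Mathlib

/-- A weighted DFA on the alphabet `[k]` (modelled as `Fin k`) with state type `V`:
a transition function, a root state, and a cost function into `ℕ∞`. -/
structure WDFA (k : ℕ) (V : Type*) where
  trans : V → Fin k → V
  root : V
  cost : V → Fin k → ℕ∞

/-- The final state of the walk from `v` reading the word `w`. -/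
def WDFA.walkEnd {k : ℕ} {V : Type*} (D : WDFA k V) : V → List (Fin k) → V
  | v, [] => v
  | v, t :: w => D.walkEnd (D.trans v t) w

/-- The cost of reading the word `w` starting from state `v`. -/
def WDFA.wordCost {k : ℕ} {V : Type*} (D : WDFA k V) : V → List (Fin k) → ℕ∞
  | _, [] => 0
  | v, t :: w => D.cost v t + D.wordCost (D.trans v t) w

/-- A `k`-DFA: a weighted DFA on alphabet `[k]` in which, at every state `v`, the
costs `c(v, ·)` form a bijection onto `{1, …, k}`. -/
def WDFA.IsKDFA {k : ℕ} {V : Type*} (D : WDFA k V) : Prop :=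
  ∀ v : V, ∃ π : Equiv.Perm (Fin k), ∀ t : Fin k, D.cost v t = (((π t : ℕ) + 1 : ℕ) : ℕ∞)

/-- A permutation `τ ∈ S_k` read as the word `τ(1), …, τ(k)`. -/
def permWord {k : ℕ} (τ : Equiv.Perm (Fin k)) : List (Fin k) :=
  (List.finRange k).map τ

/-!
Cut the word of a random permutation `τ` into `M` windows of length `s ≈ k / M`. If the total cost
is at most `(1/2 - ε) k²`, then some window, read from the state in which the walk enters it, costs
at most `(1/2 - ε/2) k s`. For a fixed start state, a uniformly random word of length `s` has a cost
which is a sum of `s` independent uniform variables on `{1, …, k}`, so by Hoeffding it is this cheap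
with probability at most `exp (-ε² s / 2)`. A window of a random permutation is not uniform, but
each word has probability at most `(k - s)! / k! ≤ k⁻ˢ exp (s² / (k - s))`, and for large `M` this
correction is absorbed. A union bound over the windows and the states costs a factor `M |V|`, which
is harmless for up to exponentially many states.
-/

open Filter Finset
open scoped Nat

lemma card_filter_perm_comp_eq_le {α β : Type*} [Fintype α] [Fintype β] [DecidableEq β]
    (e : α ↪ β) (f : α → β) :
    #{τ : Equiv.Perm β | ⇑τ ∘ e = f} ≤ (Fintype.card β - Fintype.card α)! := by
  rcases ({τ : Equiv.Perm β | ⇑τ ∘ e = f} : Finset _).eq_empty_or_nonempty with hA | ⟨τ₀, hτ₀⟩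
  · simp [hA]
  have card_fixing : #{g : Equiv.Perm β | ∀ b, ¬ b ∉ Set.range e → g b = b} =
      (Fintype.card β - Fintype.card α)! := by
    rw [← Fintype.card_subtype,
      ← Fintype.card_congr (Equiv.Perm.subtypeEquivSubtypePerm (· ∉ Set.range e)),
      Fintype.card_perm, Fintype.card_subtype_compl]
    congr 2
    exact Set.card_range_of_injective e.injective
  rw [← card_fixing]
  refine card_le_card_of_injOn (τ₀⁻¹ * ·) (fun τ hτ ↦ ?_) (mul_right_injective _).injOn
  simp only [coe_filter, mem_univ, true_and, Set.mem_ofPred_eq, mem_filter] at hτ hτ₀ ⊢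
  intro b hb
  obtain ⟨a, rfl⟩ := not_not.1 hb
  rw [Equiv.Perm.mul_apply, Equiv.Perm.inv_eq_iff_eq]
  exact congrFun (hτ.trans hτ₀.symm) a

lemma card_filter_perm_comp_mem_le {α β : Type*} [Fintype α] [Fintype β] [DecidableEq β]
    (e : α ↪ β) (A : Finset (α → β)) :
    #{τ : Equiv.Perm β | ⇑τ ∘ e ∈ A} ≤ (Fintype.card β - Fintype.card α)! * #A := by
  refine card_le_mul_card_image_of_maps_to (f := fun τ : Equiv.Perm β ↦ ⇑τ ∘ e)
    (fun τ hτ ↦ (mem_filter.1 hτ).2) _ fun f _ ↦ ?_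
  exact (card_le_card (filter_subset_filter _ (filter_subset _ _))).trans
    (card_filter_perm_comp_eq_le e f)

lemma factorial_sub_mul_pow_le {k s : ℕ} (hs : s < k) :
    ((k - s)! : ℝ) * k ^ s ≤ k ! * Real.exp (s ^ 2 / (k - s)) := by
  have hpos : (0 : ℝ) < k - s := sub_pos.2 (mod_cast hs)
  have hfac : ((k - s)! : ℝ) * (k - s) ^ s ≤ k ! := by
    have := Nat.factorial_mul_pow_sub_le_factorial (Nat.sub_le k s)
    rw [Nat.sub_sub_self hs.le] at this
    rw [← Nat.cast_sub hs.le]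
    exact_mod_cast this
  have hk : (k : ℝ) ≤ (k - s) * Real.exp (s / (k - s)) :=
    calc (k : ℝ) = (k - s) * (s / (k - s) + 1) := by field_simp; ring
      _ ≤ (k - s) * Real.exp (s / (k - s)) := by gcongr; exact Real.add_one_le_exp _
  calc ((k - s)! : ℝ) * k ^ s
      ≤ (k - s)! * ((k - s) * Real.exp (s / (k - s))) ^ s := by gcongr
    _ = (k - s)! * (k - s) ^ s * Real.exp (s ^ 2 / (k - s)) := by
        rw [mul_pow, ← Real.exp_nat_mul, ← mul_assoc]; ring_nf
    _ ≤ k ! * Real.exp (s ^ 2 / (k - s)) := by gcongr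

-- Pairing `j + 1` with its mirror image `k - j` turns twice the sum into a sum of hyperbolic
-- cosines, and `cosh x ≤ exp (x² / 2)`.
lemma sum_range_exp_neg_mul_le (l : ℝ) (k : ℕ) :
    ∑ j ∈ range k, Real.exp (-(l * (j + 1 : ℕ))) ≤
      k * Real.exp (-(l * (k + 1) / 2) + (l * k) ^ 2 / 8) := by
  have hpair : ∀ j ∈ range k,
      Real.exp (-(l * (j + 1 : ℕ))) + Real.exp (-(l * (k - 1 - j + 1 : ℕ))) ≤
        2 * Real.exp (-(l * (k + 1) / 2) + (l * k) ^ 2 / 8) := by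
    intro j hj
    have hjk : j + 1 ≤ k := mem_range.1 hj
    have hjk' : (j : ℝ) + 1 ≤ k := mod_cast hjk
    set x : ℝ := l * (k - 1 - 2 * j) / 2 with hx
    have hxsq : x ^ 2 / 2 ≤ (l * k) ^ 2 / 8 := by
      have hsq : ((k : ℝ) - 1 - 2 * j) ^ 2 ≤ k ^ 2 := by
        apply sq_le_sq' <;> linarith [j.cast_nonneg (α := ℝ)]
      calc x ^ 2 / 2 = l ^ 2 * (k - 1 - 2 * j) ^ 2 / 8 := by rw [hx]; ring
        _ ≤ l ^ 2 * k ^ 2 / 8 := by gcongr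
        _ = (l * k) ^ 2 / 8 := by rw [mul_pow]
    calc Real.exp (-(l * (j + 1 : ℕ))) + Real.exp (-(l * (k - 1 - j + 1 : ℕ)))
        = Real.exp (-(l * (k + 1) / 2)) * (2 * Real.cosh x) := by
          rw [Real.cosh_eq, mul_div_cancel₀ _ two_ne_zero, mul_add, ← Real.exp_add, ← Real.exp_add,
            show k - 1 - j + 1 = k - j by omega, Nat.cast_sub (by omega), hx]
          push_cast
          ring_nf
      _ ≤ Real.exp (-(l * (k + 1) / 2)) * (2 * Real.exp ((l * k) ^ 2 / 8)) := by
          gcongr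
          exact (Real.cosh_le_exp_half_sq x).trans (Real.exp_le_exp.2 hxsq)
      _ = 2 * Real.exp (-(l * (k + 1) / 2) + (l * k) ^ 2 / 8) := by rw [Real.exp_add]; ring
  have hsum := sum_le_sum hpair
  rw [sum_add_distrib, sum_range_reflect (fun j ↦ Real.exp (-(l * (j + 1 : ℕ)))) k, sum_const,
    card_range, nsmul_eq_mul] at hsum
  linarith

lemma eventually_const_le_exp_mul (C : ℝ) {c : ℝ} (hc : 0 < c) :
    ∀ᶠ k : ℕ in atTop, C ≤ Real.exp (c * k) :=
  (Real.tendsto_exp_atTop.comp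
    (tendsto_natCast_atTop_atTop.const_mul_atTop hc)).eventually_ge_atTop C

lemma eventually_pow_le_exp_mul (n : ℕ) {c : ℝ} (hc : 0 < c) :
    ∀ᶠ k : ℕ in atTop, (k : ℝ) ^ n ≤ Real.exp (c * k) := by
  filter_upwards [((isLittleO_pow_exp_pos_mul_atTop n hc).comp_tendsto
    tendsto_natCast_atTop_atTop).bound one_pos] with k hk
  simpa using hk

lemma take_drop_permWord {k a s : ℕ} (h : a + s ≤ k) (τ : Equiv.Perm (Fin k)) :
    ((permWord τ).drop a).take s =
      List.ofFn (τ ∘ (Fin.natAddEmb a).trans (Fin.castLEEmb h)) := by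
  refine List.ext_getElem (by simp [permWord]; omega) fun i _ _ ↦ ?_
  simp [permWord]

namespace WDFA

variable {k : ℕ} {V : Type*} {D : WDFA k V}

lemma wordCost_append (D : WDFA k V) (v : V) (w₁ w₂ : List (Fin k)) :
    D.wordCost v (w₁ ++ w₂) = D.wordCost v w₁ + D.wordCost (D.walkEnd v w₁) w₂ := by
  induction w₁ generalizing v with
  | nil => simp [wordCost, walkEnd]
  | cons t w ih => simp only [List.cons_append, wordCost, walkEnd, ih, add_assoc]

lemma sum_wordCost_windows (D : WDFA k V) (v : V) (w : List (Fin k)) (s M : ℕ) :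
    ∑ i ∈ range M, D.wordCost (D.walkEnd v (w.take (i * s))) ((w.drop (i * s)).take s) =
      D.wordCost v (w.take (M * s)) := by
  induction M with
  | zero => simp [wordCost]
  | succ M ih => rw [sum_range_succ, ih, add_mul, one_mul, List.take_add, wordCost_append]

lemma exists_mul_wordCost_window_le (D : WDFA k V) (v : V) (w : List (Fin k)) (s : ℕ) {M : ℕ}
    (hM : 0 < M) :
    ∃ i < M, ∃ u, M * D.wordCost u ((w.drop (i * s)).take s) ≤ D.wordCost v w := by
  obtain ⟨i, hi, hmin⟩ := exists_min_image (range M)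
    (fun i ↦ D.wordCost (D.walkEnd v (w.take (i * s))) ((w.drop (i * s)).take s))
    (nonempty_range_iff.2 hM.ne')
  refine ⟨i, mem_range.1 hi, D.walkEnd v (w.take (i * s)), ?_⟩
  calc M * D.wordCost (D.walkEnd v (w.take (i * s))) ((w.drop (i * s)).take s)
      ≤ ∑ j ∈ range M, D.wordCost (D.walkEnd v (w.take (j * s))) ((w.drop (j * s)).take s) := by
        simpa using card_nsmul_le_sum _ _ _ hmin
    _ = D.wordCost v (w.take (M * s)) := D.sum_wordCost_windows v w s M
    _ ≤ D.wordCost v (w.take (M * s)) + D.wordCost (D.walkEnd v (w.take (M * s)))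
          (w.drop (M * s)) := le_self_add
    _ = D.wordCost v w := by rw [← wordCost_append, List.take_append_drop]

/-- The word `w`, read from the state `v`, has finite cost at most the real number `x`. -/
def CostAtMost (D : WDFA k V) (v : V) (w : List (Fin k)) (x : ℝ) : Prop :=
  ∃ m : ℕ, D.wordCost v w = m ∧ (m : ℝ) ≤ x

lemma CostAtMost.mono {v : V} {w : List (Fin k)} {x y : ℝ} (hxy : x ≤ y)
    (h : D.CostAtMost v w x) : D.CostAtMost v w y :=
  h.imp fun _ hm ↦ ⟨hm.1, hm.2.trans hxy⟩

lemma CostAtMost.exists_window {v : V} {w : List (Fin k)} {M : ℕ} {x : ℝ}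
    (h : D.CostAtMost v w (M * x)) (hM : 0 < M) (s : ℕ) :
    ∃ i < M, ∃ u, D.CostAtMost u ((w.drop (i * s)).take s) x := by
  obtain ⟨m, hm, hmx⟩ := h
  obtain ⟨i, hi, u, hu⟩ := D.exists_mul_wordCost_window_le v w s hM
  rw [hm] at hu
  have hfin : D.wordCost u ((w.drop (i * s)).take s) ≠ ⊤ := by
    intro htop
    simp [htop, hM.ne'] at hu
  obtain ⟨n, hn⟩ := ENat.ne_top_iff_exists.1 hfin
  rw [← hn] at hu
  have hMn : (M : ℝ) * n ≤ M * x := le_trans (mod_cast hu) hmx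
  exact ⟨i, hi, u, n, hn.symm, le_of_mul_le_mul_left hMn (mod_cast hM)⟩

lemma IsKDFA.cost_ne_top (hD : D.IsKDFA) (v : V) (t : Fin k) : D.cost v t ≠ ⊤ := by
  obtain ⟨π, hπ⟩ := hD v
  exact hπ t ▸ ENat.natCast_ne_top _

lemma IsKDFA.wordCost_ne_top (hD : D.IsKDFA) (v : V) (w : List (Fin k)) :
    D.wordCost v w ≠ ⊤ := by
  induction w generalizing v with
  | nil => simp [wordCost]
  | cons t w ih => exact WithTop.add_ne_top.2 ⟨hD.cost_ne_top v t, ih _⟩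

lemma IsKDFA.sum_cost {R : Type*} [AddCommMonoid R] (hD : D.IsKDFA) (v : V) (F : ℕ → R) :
    ∑ t, F (D.cost v t).toNat = ∑ j ∈ range k, F (j + 1) := by
  obtain ⟨π, hπ⟩ := hD v
  simp only [hπ, ENat.toNat_natCast]
  rw [Equiv.sum_comp π (fun j : Fin k ↦ F (j + 1)), Fin.sum_univ_eq_sum_range (fun j ↦ F (j + 1))]

lemma IsKDFA.sum_exp_neg_wordCost (hD : D.IsKDFA) (l : ℝ) (s : ℕ) (v : V) :
    ∑ f : Fin s → Fin k, Real.exp (-(l * (D.wordCost v (List.ofFn f)).toNat)) =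
      (∑ j ∈ range k, Real.exp (-(l * (j + 1 : ℕ)))) ^ s := by
  induction s generalizing v with
  | zero => simp [wordCost]
  | succ s ih =>
    have hcons (t : Fin k) (g : Fin s → Fin k) :
        Real.exp (-(l * (D.wordCost v (List.ofFn (Fin.cons t g : Fin (s + 1) → Fin k))).toNat)) =
          Real.exp (-(l * (D.cost v t).toNat)) *
            Real.exp (-(l * (D.wordCost (D.trans v t) (List.ofFn g)).toNat)) := by
      rw [List.ofFn_cons, wordCost, ENat.toNat_add (hD.cost_ne_top v t) (hD.wordCost_ne_top _ _),
        ← Real.exp_add]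
      push_cast
      ring_nf
    rw [← (Fin.consEquiv fun _ ↦ Fin k).sum_comp, Fintype.sum_prod_type]
    simp only [Fin.consEquiv, Equiv.coe_fn_mk, hcons, ← mul_sum, ih, ← sum_mul]
    rw [hD.sum_cost v fun c ↦ Real.exp (-(l * c)), pow_succ']

open scoped Classical in
lemma IsKDFA.card_costAtMost_le (hD : D.IsKDFA) (hk : 0 < k) {d : ℝ} (hd : 0 ≤ d) (s : ℕ) (v : V) :
    (#{f : Fin s → Fin k | D.CostAtMost v (List.ofFn f) ((1 / 2 - d) * k * s)} : ℝ) ≤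
      k ^ s * Real.exp (-(2 * d ^ 2 * s)) := by
  -- `l` minimises the exponent `-(l * k) * d + (l * k) ^ 2 / 8` of the Chernoff bound.
  set l : ℝ := 4 * d / k
  have hlk : l * k = 4 * d := div_mul_cancel₀ _ (Nat.cast_ne_zero.2 hk.ne')
  set x : ℝ := (1 / 2 - d) * k * s with hx
  calc (#{f : Fin s → Fin k | D.CostAtMost v (List.ofFn f) x} : ℝ)
      = ∑ f : Fin s → Fin k with D.CostAtMost v (List.ofFn f) x, 1 := by simp
    _ ≤ ∑ f : Fin s → Fin k with D.CostAtMost v (List.ofFn f) x,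
          Real.exp (l * x) * Real.exp (-(l * (D.wordCost v (List.ofFn f)).toNat)) := by
        refine sum_le_sum fun f hf ↦ ?_
        obtain ⟨m, hm, hmx⟩ := (mem_filter.1 hf).2
        rw [hm, ENat.toNat_natCast, ← Real.exp_add, Real.one_le_exp_iff]
        have : l * m ≤ l * x := by gcongr
        linarith
    _ ≤ ∑ f : Fin s → Fin k,
          Real.exp (l * x) * Real.exp (-(l * (D.wordCost v (List.ofFn f)).toNat)) :=
        sum_le_sum_of_subset_of_nonneg (filter_subset _ _) fun _ _ _ ↦ by positivity
    _ = Real.exp (l * x) * (∑ j ∈ range k, Real.exp (-(l * (j + 1 : ℕ)))) ^ s := by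
        rw [← mul_sum, hD.sum_exp_neg_wordCost]
    _ ≤ Real.exp (l * x) * (k * Real.exp (-(l * (k + 1) / 2) + (l * k) ^ 2 / 8)) ^ s := by
        gcongr
        exact sum_range_exp_neg_mul_le l k
    _ = k ^ s * Real.exp (l * x + s * (-(l * (k + 1) / 2) + (l * k) ^ 2 / 8)) := by
        rw [mul_pow, ← Real.exp_nat_mul, Real.exp_add]; ring
    _ ≤ k ^ s * Real.exp (-(2 * d ^ 2 * s)) := by
        gcongr
        have hlx : l * x = 4 * d * (1 / 2 - d) * s := by rw [hx, ← hlk]; ring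
        have hls : 0 ≤ l * s := by positivity
        rw [hlx, mul_add l, hlk]
        linarith

open scoped Classical in
lemma IsKDFA.card_costAtMost_window_le (hD : D.IsKDFA) (hk : 0 < k) {d : ℝ} (hd : 0 ≤ d) {a s : ℕ}
    (has : a + s ≤ k) (hsd : (s : ℝ) ≤ d ^ 2 * (k - s)) (v : V) :
    (#{τ : Equiv.Perm (Fin k) |
        D.CostAtMost v (((permWord τ).drop a).take s) ((1 / 2 - d) * k * s)} : ℝ) ≤
      k ! * Real.exp (-(d ^ 2 * s)) := by
  have hsk : s < k := by
    refine lt_of_le_of_ne (by omega) ?_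
    rintro rfl
    simp [hk.ne'] at hsd
  have hpos : (0 : ℝ) < k - s := sub_pos.2 (mod_cast hsk)
  have hcount := card_filter_perm_comp_mem_le ((Fin.natAddEmb a).trans (Fin.castLEEmb has))
    {f : Fin s → Fin k | D.CostAtMost v (List.ofFn f) ((1 / 2 - d) * k * s)}
  simp only [mem_filter_univ, Fintype.card_fin, ← take_drop_permWord has] at hcount
  calc (#{τ : Equiv.Perm (Fin k) |
        D.CostAtMost v (((permWord τ).drop a).take s) ((1 / 2 - d) * k * s)} : ℝ)
      ≤ (k - s)! *
          #{f : Fin s → Fin k | D.CostAtMost v (List.ofFn f) ((1 / 2 - d) * k * s)} :=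
        mod_cast hcount
    _ ≤ (k - s)! * (k ^ s * Real.exp (-(2 * d ^ 2 * s))) := by
        gcongr
        exact hD.card_costAtMost_le hk hd s v
    _ ≤ k ! * Real.exp (s ^ 2 / (k - s)) * Real.exp (-(2 * d ^ 2 * s)) := by
        rw [← mul_assoc]
        exact mul_le_mul_of_nonneg_right (factorial_sub_mul_pow_le hsk) (Real.exp_nonneg _)
    _ ≤ k ! * Real.exp (-(d ^ 2 * s)) := by
        have hcorr : (s : ℝ) ^ 2 / (k - s) ≤ d ^ 2 * s := by
          rw [div_le_iff₀ hpos]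
          nlinarith [s.cast_nonneg (α := ℝ)]
        rw [mul_assoc, ← Real.exp_add]
        gcongr
        linarith

open scoped Classical in
lemma IsKDFA.card_costAtMost_permWord_le [Fintype V] (hD : D.IsKDFA) (hk : 0 < k) {d : ℝ}
    (hd : 0 ≤ d) {M s : ℕ} (hM : 0 < M) (hMs : M * s ≤ k) (hsd : (s : ℝ) ≤ d ^ 2 * (k - s))
    (v : V) :
    (#{τ : Equiv.Perm (Fin k) |
        D.CostAtMost v (permWord τ) (M * ((1 / 2 - d) * k * s))} : ℝ) ≤
      M * Fintype.card V * (k ! * Real.exp (-(d ^ 2 * s))) := by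
  have hunion : ({τ : Equiv.Perm (Fin k) |
        D.CostAtMost v (permWord τ) (M * ((1 / 2 - d) * k * s))} : Finset _) ⊆
      (range M ×ˢ (univ : Finset V)).biUnion fun p ↦ {τ : Equiv.Perm (Fin k) |
        D.CostAtMost p.2 (((permWord τ).drop (p.1 * s)).take s) ((1 / 2 - d) * k * s)} := by
    intro τ hτ
    obtain ⟨i, hi, u, hu⟩ := (mem_filter.1 hτ).2.exists_window hM s
    simp only [mem_biUnion, mem_product, mem_range, mem_univ, and_true, mem_filter, true_and,
      Prod.exists]
    exact ⟨i, u, hi, hu⟩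
  calc _ ≤ ∑ p ∈ range M ×ˢ (univ : Finset V), (#{τ : Equiv.Perm (Fin k) |
          D.CostAtMost p.2 (((permWord τ).drop (p.1 * s)).take s) ((1 / 2 - d) * k * s)} : ℝ) :=
        mod_cast (card_le_card hunion).trans card_biUnion_le
    _ ≤ ∑ p ∈ range M ×ˢ (univ : Finset V), (k ! * Real.exp (-(d ^ 2 * s)) : ℝ) := by
        refine sum_le_sum fun p hp ↦ hD.card_costAtMost_window_le hk hd ?_ hsd p.2
        have hpM : p.1 < M := mem_range.1 (mem_product.1 hp).1
        nlinarith
    _ = M * Fintype.card V * (k ! * Real.exp (-(d ^ 2 * s))) := by simp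

open scoped Classical in
lemma IsKDFA.card_costAtMost_half_sub_mul_sq_le [Fintype V] (hD : D.IsKDFA) {ε : ℝ} (hε : 0 < ε)
    {M : ℕ} (hM : 1 ≤ (ε / 2) ^ 2 * (M - 1)) (hk : 1 ≤ ε * (k / M : ℕ)) (v : V) :
    (#{τ : Equiv.Perm (Fin k) | D.CostAtMost v (permWord τ) ((1 / 2 - ε) * k ^ 2)} : ℝ) ≤
      M * Fintype.card V * (k ! * Real.exp (-((ε / 2) ^ 2 * (k / M : ℕ)))) := by
  set s : ℕ := k / M with hs
  have hM0 : 0 < M := by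
    rcases M.eq_zero_or_pos with rfl | hpos
    · nlinarith [sq_nonneg (ε / 2)]
    · exact hpos
  have hk0 : 0 < k := by
    rcases k.eq_zero_or_pos with rfl | hpos
    · simp only [hs, Nat.zero_div, Nat.cast_zero, mul_zero] at hk
      linarith
    · exact hpos
  have hMs : M * s ≤ k := Nat.mul_div_le k M
  have hMs' : (M : ℝ) * s ≤ k := mod_cast hMs
  have hkM : (k : ℝ) ≤ M * (s + 1) := mod_cast (Nat.lt_mul_div_succ k hM0).le
  have hsd : (s : ℝ) ≤ (ε / 2) ^ 2 * (k - s) :=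
    calc (s : ℝ) = 1 * s := (one_mul _).symm
      _ ≤ (ε / 2) ^ 2 * (M - 1) * s := by gcongr
      _ = (ε / 2) ^ 2 * (M * s - s) := by ring
      _ ≤ (ε / 2) ^ 2 * (k - s) := by gcongr
  have hthreshold : (1 / 2 - ε) * (k : ℝ) ^ 2 ≤ M * ((1 / 2 - ε / 2) * k * s) :=
    calc (1 / 2 - ε) * (k : ℝ) ^ 2 = k * (1 / 2 * k - ε * k) := by ring
      _ ≤ k * (1 / 2 * (M * (s + 1)) - ε * (M * s)) := by gcongr
      _ = M * ((1 / 2 - ε / 2) * k * s) - k * M * (ε * s - 1) / 2 := by ring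
      _ ≤ M * ((1 / 2 - ε / 2) * k * s) := by
        have : 0 ≤ ε * s - 1 := sub_nonneg.2 hk
        exact sub_le_self _ (by positivity)
  refine le_trans ?_ (hD.card_costAtMost_permWord_le hk0 (half_pos hε).le hM0 hMs hsd v)
  exact Nat.cast_le.2 (card_le_card (monotone_filter_right _ fun _ _ h ↦ h.mono hthreshold))

end WDFA

theorem kDFA_few_cheap_permutations_general {ε : ℝ} (hε : 0 < ε) :
    ∃ c : ℝ, 0 < c ∧ ∀ᶠ k : ℕ in atTop,
      ∀ (V : Type*) [Fintype V], (Fintype.card V : ℝ) ≤ Real.exp (c * k) →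
        ∀ D : WDFA k V, D.IsKDFA →
          (Nat.card {τ : Equiv.Perm (Fin k) //
              D.CostAtMost D.root (permWord τ) ((1 / 2 - ε) * k ^ 2)} : ℝ) ≤
            Real.exp (-c * k) * k ! := by
  obtain ⟨M, hM⟩ := exists_nat_ge (1 / (ε / 2) ^ 2 + 1)
  have hMε : 1 ≤ (ε / 2) ^ 2 * (M - 1) := by
    rwa [← le_sub_iff_add_le, div_le_iff₀' (by positivity)] at hM
  have hM0 : 0 < M := Nat.cast_pos.1 (lt_of_lt_of_le (by positivity) hM)
  obtain ⟨c, hc0, hc⟩ : ∃ c : ℝ, 0 < c ∧ (ε / 2) ^ 2 = 3 * c * M :=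
    ⟨(ε / 2) ^ 2 / (3 * M), by positivity, by field_simp⟩
  refine ⟨c, hc0, ?_⟩
  filter_upwards [eventually_ge_atTop (M * ⌈1 / ε⌉₊),
    eventually_const_le_exp_mul (M * Real.exp ((ε / 2) ^ 2)) hc0] with k hkceil hexp V _ hV D hD
  classical
  have hk : 1 ≤ ε * (k / M : ℕ) := by
    have hceil : ⌈1 / ε⌉₊ ≤ k / M := (Nat.le_div_iff_mul_le hM0).2 (by rwa [mul_comm])
    exact (div_le_iff₀' hε).1 ((Nat.le_ceil _).trans (mod_cast hceil))
  have hdecay : -((ε / 2) ^ 2 * (k / M : ℕ)) ≤ (ε / 2) ^ 2 + -(3 * c * k) := by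
    have hkM : (k : ℝ) ≤ M * ((k / M : ℕ) + 1) := mod_cast (Nat.lt_mul_div_succ k hM0).le
    rw [hc]
    nlinarith
  rw [Nat.card_eq_fintype_card, Fintype.card_subtype]
  calc _ ≤ M * Fintype.card V * (k ! * Real.exp (-((ε / 2) ^ 2 * (k / M : ℕ)))) :=
        hD.card_costAtMost_half_sub_mul_sq_le hε hMε hk D.root
    _ ≤ M * Real.exp (c * k) * (k ! * Real.exp ((ε / 2) ^ 2 + -(3 * c * k))) := by gcongr
    _ = M * Real.exp ((ε / 2) ^ 2) * (Real.exp (c * k) * Real.exp (-(3 * c * k)) * k !) := by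
        rw [Real.exp_add]; ring
    _ ≤ Real.exp (c * k) * (Real.exp (c * k) * Real.exp (-(3 * c * k)) * k !) := by gcongr
    _ = Real.exp (-c * k) * k ! := by
        rw [← mul_assoc, ← Real.exp_add, ← Real.exp_add]; ring_nf

/-- Theorem (main counting bound): for every `ε* > 0` there is `c > 0` such that for all
sufficiently large `k`, every `k`-DFA with at most `k²` states admits at most
`exp(−ck)·k!` permutations `τ ∈ S_k` with `c(root, τ) ≤ (1/2 − ε*)k²`; i.e.
`G(k, (1/2 − ε*)k², k²) ≤ exp(−ck)·k!`. -/
theorem kDFA_few_cheap_permutations :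
    ∀ ε : ℝ, 0 < ε → ∃ c : ℝ, 0 < c ∧ ∃ K : ℕ, ∀ k : ℕ, K ≤ k →
      ∀ (V : Type) [Fintype V], Fintype.card V ≤ k^2 →
        ∀ D : WDFA k V, D.IsKDFA →
          (Nat.card {τ : Equiv.Perm (Fin k) // ∃ m : ℕ,
              D.wordCost D.root (permWord τ) = (m : ℕ∞) ∧
              (m : ℝ) ≤ (1/2 - ε) * (k : ℝ)^2} : ℝ) ≤
            Real.exp (-c * k) * (Nat.factorial k) := by
  intro ε hε
  obtain ⟨c, hc, hgeneral⟩ := kDFA_few_cheap_permutations_general hε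
  obtain ⟨K, hK⟩ := eventually_atTop.1 (hgeneral.and (eventually_pow_le_exp_mul 2 hc))
  exact ⟨c, hc, K, fun k hk V _ hV D hD ↦
    (hK k hk).1 V (le_trans (mod_cast hV) (hK k hk).2) D hD⟩
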